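/- arXiv:quant-ph/0505001 — 2 statements merged into one kernel-verified Lean document; each statement's English description precedes it below -/
import Mathlib

section
/- For any quantum secret sharing scheme W_N and any significant set X ⊆ N (i.e., there exists a forbidden set Y with X ∪ Y qualified), and for every probability measure μ supported on pure states with barycenter σ_μ, it holds that H(σ_μ) ≤ H(W_X(σ_μ)). -/
open Matrix
open scoped ComplexOrder

noncomputable section

/-- A density operator: positive semidefinite with unit trace. -/
def IsDensity {n : Type*} [Fintype n] (ρ : Matrix n n ℂ) : Prop :=
  ρ.PosSemidef ∧ ρ.trace = 1

/-- A pure state: a density operator that is a (rank-one) projection. -/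
def IsPure {n : Type*} [Fintype n] (ρ : Matrix n n ℂ) : Prop :=
  IsDensity ρ ∧ ρ * ρ = ρ

/-- A quantum channel (CPTP map), characterized by a Kraus representation. -/
def IsCPTP {n m : Type*} [Fintype n] [DecidableEq n] [Fintype m]
    (E : Matrix n n ℂ →ₗ[ℂ] Matrix m m ℂ) : Prop :=
  ∃ (N : ℕ) (K : Fin N → Matrix m n ℂ),
    (∀ ρ, E ρ = ∑ a, K a * ρ * (K a)ᴴ) ∧ ∑ a, (K a)ᴴ * K a = 1

/-- The von Neumann entropy `H(ρ) = -Tr[ρ log ρ]`, via the eigenvalues. -/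
def vnEntropy {n : Type*} [Fintype n] [DecidableEq n] (ρ : Matrix n n ℂ) : ℝ :=
  if h : ρ.IsHermitian then ∑ i, Real.negMulLog (h.eigenvalues i) else 0

/-- The matrix (spectral) logarithm of a Hermitian matrix. -/
def matLog {n : Type*} [Fintype n] [DecidableEq n] (ρ : Matrix n n ℂ) : Matrix n n ℂ :=
  if h : ρ.IsHermitian then
    (h.eigenvectorUnitary : Matrix n n ℂ) *
      diagonal (fun i => (Real.log (h.eigenvalues i) : ℂ)) *
      star (h.eigenvectorUnitary : Matrix n n ℂ)
  else 0

/-- The quantum relative entropy `D(ρ‖σ) = Tr[ρ (log ρ - log σ)]`. -/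
def relEntropy {n : Type*} [Fintype n] [DecidableEq n] (ρ σ : Matrix n n ℂ) : ℝ :=
  ((ρ * (matLog ρ - matLog σ)).trace).re
variable {nn : ℕ} {d : Fin nn → Type} [∀ i, Fintype (d i)] [∀ i, DecidableEq (d i)]
variable {H : Type} [Fintype H] [DecidableEq H]

/-- Combine an assignment on a subset `X` of shares with one on its complement. -/
def mergeFun (X : Finset (Fin nn)) (f : (i : {i // i ∈ X}) → d i)
    (z : (i : {i // i ∉ X}) → d i) : (i : Fin nn) → d i :=
  fun i => if h : i ∈ X then f ⟨i, h⟩ else z ⟨i, h⟩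

/-- Partial trace onto the subsystem given by the subset `X` of shares
(tracing out the shares in the complement of `X`). -/
def ptraceSubset (X : Finset (Fin nn))
    (M : Matrix ((i : Fin nn) → d i) ((i : Fin nn) → d i) ℂ) :
    Matrix ((i : {i // i ∈ X}) → d i) ((i : {i // i ∈ X}) → d i) ℂ :=
  fun f g => ∑ z : (i : {i // i ∉ X}) → d i, M (mergeFun X f z) (mergeFun X g z)

/-- A subset `X` of shares is qualified: the reduced channel `W_X` is reversible on all
density operators, i.e. the original state can be perfectly recovered from `X`. -/
def Qualified (W : Matrix H H ℂ →ₗ[ℂ] Matrix ((i : Fin nn) → d i) ((i : Fin nn) → d i) ℂ)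
    (X : Finset (Fin nn)) : Prop :=
  ∃ R : Matrix ((i : {i // i ∈ X}) → d i) ((i : {i // i ∈ X}) → d i) ℂ →ₗ[ℂ] Matrix H H ℂ,
    IsCPTP R ∧ ∀ ρ : Matrix H H ℂ, IsDensity ρ → R (ptraceSubset X (W ρ)) = ρ

/-- A subset `X` of shares is forbidden: the reduced channel `W_X` is vanishing
(constant) on all density operators, i.e. `X` has no information on the state. -/
def Forbidden (W : Matrix H H ℂ →ₗ[ℂ] Matrix ((i : Fin nn) → d i) ((i : Fin nn) → d i) ℂ)
    (X : Finset (Fin nn)) : Prop :=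
  ∃ ρ₀, IsDensity ρ₀ ∧ ∀ ρ : Matrix H H ℂ, IsDensity ρ → ptraceSubset X (W ρ) = ρ₀

/-- A `(k, L, n)`-threshold ramp quantum secret sharing scheme: a channel from states
on `H` into the `n`-share system such that a subset `X` is qualified iff `|X| ≥ k` and
forbidden iff `|X| ≤ k - L`. -/
def IsRampQSS (k L : ℕ)
    (W : Matrix H H ℂ →ₗ[ℂ] Matrix ((i : Fin nn) → d i) ((i : Fin nn) → d i) ℂ) : Prop :=
  IsCPTP W ∧
    (∀ X : Finset (Fin nn), Qualified W X ↔ k ≤ X.card) ∧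
    (∀ X : Finset (Fin nn), Forbidden W X ↔ X.card ≤ k - L)

/-!
Purify the barycenter with a reference `R`, and dilate `W_{X ∪ Y}` to an isometry into
`X ⊗ Y ⊗ C`, where we may take `X` and `Y` disjoint. Since `Y` is forbidden, the joint state of `R`
and `Y` is a product. Since `X ∪ Y` is qualified, recovery composed with the dilation is the
identity, all of whose Kraus operators are scalars, so that `R` and the environment `C` are in a
product state too. Complementary marginals of a pure state have equal entropies, hence by
subadditivity `H(R) + H(Y) = H(XC) ≤ H(X) + H(C)` and `H(R) + H(C) = H(XY) ≤ H(X) + H(Y)`.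
Adding the two gives `H(R) ≤ H(X)`.
-/

section Entropy

theorem isHermitian_diagonal_ofReal {n : Type*} [DecidableEq n] (l : n → ℝ) :
    (diagonal fun i => (l i : ℂ)).IsHermitian :=
  isHermitian_diagonal_of_self_adjoint _ (funext fun i => Complex.conj_ofReal (l i))

variable {m n : Type*} [Fintype m] [DecidableEq m] [Fintype n] [DecidableEq n]

theorem vnEntropy_eq_sum_roots_charpoly {ρ : Matrix n n ℂ} (hρ : ρ.IsHermitian) :
    vnEntropy ρ = (ρ.charpoly.roots.map fun z : ℂ => Real.negMulLog z.re).sum := by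
  rw [vnEntropy, dif_pos hρ, hρ.roots_charpoly_eq_eigenvalues, Multiset.map_map]
  rfl

theorem vnEntropy_congr_charpoly {ρ σ : Matrix n n ℂ} (hρ : ρ.IsHermitian) (hσ : σ.IsHermitian)
    (h : ρ.charpoly = σ.charpoly) : vnEntropy ρ = vnEntropy σ := by
  rw [vnEntropy_eq_sum_roots_charpoly hρ, vnEntropy_eq_sum_roots_charpoly hσ, h]

theorem vnEntropy_transpose {ρ : Matrix n n ℂ} (hρ : ρ.IsHermitian) :
    vnEntropy ρᵀ = vnEntropy ρ :=
  vnEntropy_congr_charpoly hρ.transpose hρ ρ.charpoly_transpose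

theorem vnEntropy_unitary_conj {ρ U : Matrix n n ℂ} (hρ : ρ.IsHermitian)
    (hU : U ∈ unitaryGroup n ℂ) : vnEntropy (U * ρ * Uᴴ) = vnEntropy ρ := by
  refine vnEntropy_congr_charpoly (isHermitian_mul_mul_conjTranspose U hρ) hρ ?_
  rw [charpoly_mul_comm, ← mul_assoc, ← star_eq_conjTranspose, mem_unitaryGroup_iff'.mp hU, one_mul]

-- The spectra of `M * Mᴴ` and `Mᴴ * M` differ only by zeros, where `negMulLog` vanishes.
theorem vnEntropy_mul_conjTranspose_comm (M : Matrix m n ℂ) :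
    vnEntropy (M * Mᴴ) = vnEntropy (Mᴴ * M) := by
  rw [vnEntropy_eq_sum_roots_charpoly (isHermitian_mul_conjTranspose_self M),
    vnEntropy_eq_sum_roots_charpoly (isHermitian_conjTranspose_mul_self M)]
  have X_pow_mul_ne_zero (k : ℕ) {p : Polynomial ℂ} (hp : p.Monic) : Polynomial.X ^ k * p ≠ 0 :=
    mul_ne_zero (pow_ne_zero _ Polynomial.X_ne_zero) hp.ne_zero
  have h := congrArg (fun p : Polynomial ℂ => (p.roots.map fun z : ℂ => Real.negMulLog z.re).sum)
    (charpoly_mul_comm' M Mᴴ)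
  rw [Polynomial.roots_mul (X_pow_mul_ne_zero _ (charpoly_monic _)),
    Polynomial.roots_mul (X_pow_mul_ne_zero _ (charpoly_monic _))] at h
  simpa [Multiset.map_nsmul, Multiset.sum_nsmul] using h

theorem vnEntropy_diagonal (l : n → ℝ) :
    vnEntropy (diagonal fun i => (l i : ℂ)) = ∑ i, Real.negMulLog (l i) := by
  rw [vnEntropy_eq_sum_roots_charpoly (isHermitian_diagonal_ofReal l), charpoly_diagonal,
    Polynomial.roots_prod]
  · simp
  · simp [Finset.prod_ne_zero_iff, Polynomial.X_sub_C_ne_zero]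

theorem exists_unitary_conj_diagonal {ρ : Matrix n n ℂ} (hρ : ρ.IsHermitian) :
    ∃ U ∈ unitaryGroup n ℂ, ∃ l : n → ℝ, ρ = U * diagonal (fun i => (l i : ℂ)) * Uᴴ :=
  ⟨hρ.eigenvectorUnitary, hρ.eigenvectorUnitary.2, hρ.eigenvalues, hρ.spectral_theorem⟩

theorem exists_unitary_conj_eq_diagonal {ρ : Matrix n n ℂ} (hρ : ρ.IsHermitian) :
    ∃ U ∈ unitaryGroup n ℂ, ∃ l : n → ℝ, U * ρ * Uᴴ = diagonal (fun i => (l i : ℂ)) := by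
  obtain ⟨U, hU, l, rfl⟩ := exists_unitary_conj_diagonal hρ
  have hU' : Uᴴ * U = 1 := mem_unitaryGroup_iff'.mp hU
  refine ⟨Uᴴ, Unitary.star_mem hU, l, ?_⟩
  simp only [mul_assoc, conjTranspose_conjTranspose, hU', mul_one]
  rw [← mul_assoc, hU', one_mul]

theorem trace_unitary_conj {U : Matrix n n ℂ} (hU : U ∈ unitaryGroup n ℂ) (ρ : Matrix n n ℂ) :
    (U * ρ * Uᴴ).trace = ρ.trace := by
  rw [trace_mul_comm, ← mul_assoc, ← star_eq_conjTranspose, mem_unitaryGroup_iff'.mp hU, one_mul]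

theorem vnEntropy_unitary_conj_diagonal {U : Matrix n n ℂ} (hU : U ∈ unitaryGroup n ℂ)
    (l : n → ℝ) :
    vnEntropy (U * diagonal (fun i => (l i : ℂ)) * Uᴴ) = ∑ i, Real.negMulLog (l i) := by
  rw [vnEntropy_unitary_conj (isHermitian_diagonal_ofReal l) hU, vnEntropy_diagonal]

open scoped Kronecker in
theorem vnEntropy_kronecker {α : Matrix m m ℂ} {β : Matrix n n ℂ} (hα : α.IsHermitian)
    (hβ : β.IsHermitian) (hα_trace : α.trace = 1) (hβ_trace : β.trace = 1) :
    vnEntropy (α ⊗ₖ β) = vnEntropy α + vnEntropy β := by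
  obtain ⟨U, hU, p, rfl⟩ := exists_unitary_conj_diagonal hα
  obtain ⟨V, hV, q, rfl⟩ := exists_unitary_conj_diagonal hβ
  rw [trace_unitary_conj hU, trace_diagonal] at hα_trace
  rw [trace_unitary_conj hV, trace_diagonal] at hβ_trace
  have p_sum : ∑ i, p i = 1 := mod_cast hα_trace
  have q_sum : ∑ j, q j = 1 := mod_cast hβ_trace
  have kronecker_eq : (U * diagonal (fun i => (p i : ℂ)) * Uᴴ) ⊗ₖ
      (V * diagonal (fun j => (q j : ℂ)) * Vᴴ) =
      (U ⊗ₖ V) * diagonal (fun ij : m × n => ((p ij.1 * q ij.2 : ℝ) : ℂ)) * (U ⊗ₖ V)ᴴ := by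
    simp only [mul_kronecker_mul, diagonal_kronecker_diagonal, conjTranspose_kronecker,
      Complex.ofReal_mul]
  rw [kronecker_eq, vnEntropy_unitary_conj_diagonal (kronecker_mem_unitary hU hV),
    vnEntropy_unitary_conj_diagonal hU, vnEntropy_unitary_conj_diagonal hV,
    Fintype.sum_prod_type]
  simp only [Real.negMulLog_mul, Finset.sum_add_distrib, ← Finset.sum_mul, ← Finset.mul_sum,
    p_sum, q_sum, one_mul]

theorem sum_normSq_row_of_mem_unitaryGroup {U : Matrix n n ℂ} (hU : U ∈ unitaryGroup n ℂ)
    (i : n) : ∑ k, Complex.normSq (U i k) = 1 := by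
  have h := congrFun₂ (mem_unitaryGroup_iff.mp hU) i i
  simp only [mul_apply, star_apply, one_apply_eq, RCLike.star_def, Complex.mul_conj] at h
  exact_mod_cast h

theorem sum_normSq_col_of_mem_unitaryGroup {U : Matrix n n ℂ} (hU : U ∈ unitaryGroup n ℂ)
    (k : n) : ∑ i, Complex.normSq (U i k) = 1 := by
  simpa [star_apply, Complex.normSq_conj] using
    sum_normSq_row_of_mem_unitaryGroup (Unitary.star_mem hU) k

-- The diagonal is the image of the spectrum under the doubly stochastic matrix `|U i k|²`.
theorem vnEntropy_le_sum_negMulLog_diag {ρ : Matrix n n ℂ} (hρ : ρ.PosSemidef) :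
    vnEntropy ρ ≤ ∑ i, Real.negMulLog (ρ i i).re := by
  let U : Matrix n n ℂ := hρ.1.eigenvectorUnitary
  let l := hρ.1.eigenvalues
  have hU : U ∈ unitaryGroup n ℂ := hρ.1.eigenvectorUnitary.2
  have diag_eq (i : n) : (ρ i i).re = ∑ k, Complex.normSq (U i k) * l k := by
    have ρ_eq : ρ = U * diagonal (fun i => (l i : ℂ)) * Uᴴ := hρ.1.spectral_theorem
    rw [ρ_eq, mul_apply, Complex.re_sum]
    refine Finset.sum_congr rfl fun k _ => ?_
    rw [mul_diagonal, conjTranspose_apply, mul_right_comm, RCLike.star_def, Complex.mul_conj,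
      ← Complex.ofReal_mul, Complex.ofReal_re]
  calc vnEntropy ρ = ∑ k, (∑ i, Complex.normSq (U i k)) * Real.negMulLog (l k) := by
        simp only [sum_normSq_col_of_mem_unitaryGroup hU, one_mul, vnEntropy, dif_pos hρ.1, l]
    _ = ∑ i, ∑ k, Complex.normSq (U i k) * Real.negMulLog (l k) := by
        simp only [Finset.sum_mul]
        exact Finset.sum_comm
    _ ≤ ∑ i, Real.negMulLog (∑ k, Complex.normSq (U i k) * l k) :=
        Finset.sum_le_sum fun i _ => Real.concaveOn_negMulLog.le_map_sum
          (fun k _ => Complex.normSq_nonneg _) (sum_normSq_row_of_mem_unitaryGroup hU i)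
          (fun k _ => hρ.eigenvalues_nonneg k)
    _ = ∑ i, Real.negMulLog (ρ i i).re := by simp only [diag_eq]

end Entropy

section ShannonEntropy

variable {a b : Type*} [Fintype a] [Fintype b]

theorem sum_negMulLog_le_neg_sum_mul_log {p q : a → ℝ} (hp : ∀ i, 0 ≤ p i) (hq : ∀ i, 0 ≤ q i)
    (hpq : ∀ i, q i = 0 → p i = 0) (hsum : ∑ i, q i ≤ ∑ i, p i) :
    ∑ i, Real.negMulLog (p i) ≤ -∑ i, p i * Real.log (q i) := by
  have pointwise (i : a) : Real.negMulLog (p i) ≤ -(p i * Real.log (q i)) + (q i - p i) := by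
    rcases (hp i).eq_or_lt with hpi | hpi
    · simp [← hpi, hq i]
    · have hqi : 0 < q i := (hq i).lt_of_ne' fun h => hpi.ne' (hpq i h)
      have log_div_le := Real.log_le_sub_one_of_pos (div_pos hqi hpi)
      rw [Real.log_div hqi.ne' hpi.ne'] at log_div_le
      have mul_log_div_le := mul_le_mul_of_nonneg_left log_div_le hpi.le
      rw [mul_sub, mul_sub, mul_div_cancel₀ _ hpi.ne'] at mul_log_div_le
      rw [Real.negMulLog]
      linarith
  have sum_le := Finset.sum_le_sum fun i (_ : i ∈ Finset.univ) => pointwise i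
  simp only [Finset.sum_add_distrib, Finset.sum_sub_distrib, Finset.sum_neg_distrib] at sum_le
  linarith

theorem sum_negMulLog_le_add_marginals {p : a × b → ℝ} (hp : ∀ x, 0 ≤ p x)
    (hsum : ∑ x, p x = 1) :
    ∑ x, Real.negMulLog (p x) ≤
      ∑ i, Real.negMulLog (∑ j, p (i, j)) + ∑ j, Real.negMulLog (∑ i, p (i, j)) := by
  let P (i : a) : ℝ := ∑ j, p (i, j)
  let Q (j : b) : ℝ := ∑ i, p (i, j)
  have le_P (x : a × b) : p x ≤ P x.1 :=
    Finset.single_le_sum (f := fun j => p (x.1, j)) (fun j _ => hp _) (Finset.mem_univ x.2)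
  have le_Q (x : a × b) : p x ≤ Q x.2 :=
    Finset.single_le_sum (f := fun i => p (i, x.2)) (fun i _ => hp _) (Finset.mem_univ x.1)
  have P_sum : ∑ i, P i = 1 := by rw [← hsum, Fintype.sum_prod_type]
  have Q_sum : ∑ j, Q j = 1 := by rw [← hsum, Fintype.sum_prod_type_right]
  have eq_zero (x : a × b) (hx : P x.1 * Q x.2 = 0) : p x = 0 := by
    rcases mul_eq_zero.mp hx with h | h
    · exact le_antisymm (h ▸ le_P x) (hp x)
    · exact le_antisymm (h ▸ le_Q x) (hp x)
  have mul_log_mul (x : a × b) :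
      p x * Real.log (P x.1 * Q x.2) = p x * Real.log (P x.1) + p x * Real.log (Q x.2) := by
    by_cases hx : P x.1 * Q x.2 = 0
    · simp [eq_zero x hx]
    · rw [Real.log_mul (left_ne_zero_of_mul hx) (right_ne_zero_of_mul hx), mul_add]
  calc ∑ x, Real.negMulLog (p x) ≤ -∑ x, p x * Real.log (P x.1 * Q x.2) := by
        refine sum_negMulLog_le_neg_sum_mul_log hp
          (fun x => mul_nonneg ((hp x).trans (le_P x)) ((hp x).trans (le_Q x))) eq_zero ?_
        rw [Fintype.sum_prod_type, ← Fintype.sum_mul_sum, P_sum, Q_sum, hsum, one_mul]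
    _ = -(∑ i, P i * Real.log (P i) + ∑ j, Q j * Real.log (Q j)) := by
        simp only [mul_log_mul, Finset.sum_add_distrib]
        rw [Fintype.sum_prod_type, Fintype.sum_prod_type_right]
        simp only [P, Q, Finset.sum_mul]
    _ = ∑ i, Real.negMulLog (P i) + ∑ j, Real.negMulLog (Q j) := by
        simp only [Real.negMulLog, neg_mul, Finset.sum_neg_distrib, neg_add]

end ShannonEntropy

section PartialTrace

variable {a b : Type*}

section Semiring

variable {R : Type*} [Semiring R]

/-- The partial trace over the second tensor factor. -/
def partialTraceRight [Fintype b] : Matrix (a × b) (a × b) R →ₗ[R] Matrix a a R where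
  toFun M := of fun i i' => ∑ j, M (i, j) (i', j)
  map_add' M N := by ext; simp [Finset.sum_add_distrib]
  map_smul' c M := by ext; simp [Finset.mul_sum]

/-- The partial trace over the first tensor factor. -/
def partialTraceLeft [Fintype a] : Matrix (a × b) (a × b) R →ₗ[R] Matrix b b R where
  toFun M := of fun j j' => ∑ i, M (i, j) (i, j')
  map_add' M N := by ext; simp [Finset.sum_add_distrib]
  map_smul' c M := by ext; simp [Finset.mul_sum]

theorem partialTraceRight_apply [Fintype b] (M : Matrix (a × b) (a × b) R) (i i' : a) :
    partialTraceRight M i i' = ∑ j, M (i, j) (i', j) :=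
  rfl

theorem partialTraceLeft_apply [Fintype a] (M : Matrix (a × b) (a × b) R) (j j' : b) :
    partialTraceLeft M j j' = ∑ i, M (i, j) (i, j') :=
  rfl

theorem partialTraceLeft_eq_partialTraceRight_submatrix [Fintype a] (M : Matrix (a × b) (a × b) R) :
    partialTraceLeft M =
      partialTraceRight (M.submatrix (Equiv.prodComm b a) (Equiv.prodComm b a)) :=
  rfl

variable [Fintype a] [Fintype b]

theorem trace_partialTraceRight (M : Matrix (a × b) (a × b) R) :
    (partialTraceRight M).trace = M.trace :=
  (Fintype.sum_prod_type fun x => M x x).symm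

theorem trace_partialTraceLeft (M : Matrix (a × b) (a × b) R) :
    (partialTraceLeft M).trace = M.trace :=
  (Fintype.sum_prod_type_right fun x => M x x).symm

open scoped Kronecker

theorem trace_partialTraceRight_mul [DecidableEq b] (M : Matrix (a × b) (a × b) R)
    (X : Matrix a a R) : (partialTraceRight M * X).trace = (M * (X ⊗ₖ 1)).trace := by
  simp only [trace, diag_apply, mul_apply, partialTraceRight_apply, Finset.sum_mul,
    kroneckerMap_apply, one_apply, mul_ite, mul_one, mul_zero, Fintype.sum_prod_type,
    Finset.sum_ite_eq', Finset.mem_univ, if_true]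
  exact Finset.sum_congr rfl fun i _ => Finset.sum_comm

end Semiring

theorem partialTraceRight_posSemidef [Fintype b] {M : Matrix (a × b) (a × b) ℂ}
    (hM : M.PosSemidef) : (partialTraceRight M).PosSemidef := by
  have eq_sum : partialTraceRight M = ∑ j, M.submatrix (Prod.mk · j) (Prod.mk · j) := by
    ext
    simp [partialTraceRight_apply, Matrix.sum_apply]
  rw [eq_sum]
  exact posSemidef_sum _ fun j _ => hM.submatrix _

theorem partialTraceLeft_posSemidef [Fintype a] {M : Matrix (a × b) (a × b) ℂ}
    (hM : M.PosSemidef) : (partialTraceLeft M).PosSemidef := by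
  rw [partialTraceLeft_eq_partialTraceRight_submatrix]
  exact partialTraceRight_posSemidef (hM.submatrix _)

variable [Fintype a] [Fintype b]

open scoped Kronecker

theorem partialTraceRight_unitary_conj [DecidableEq b] {U : Matrix a a ℂ} {V : Matrix b b ℂ}
    (hV : V ∈ unitaryGroup b ℂ) (ρ : Matrix (a × b) (a × b) ℂ) :
    partialTraceRight ((U ⊗ₖ V) * ρ * (U ⊗ₖ V)ᴴ) = U * partialTraceRight ρ * Uᴴ := by
  refine ext_iff_trace_mul_right.mpr fun X => ?_
  have kronecker_conj : (U ⊗ₖ V)ᴴ * (X ⊗ₖ 1) * (U ⊗ₖ V) = (Uᴴ * X * U) ⊗ₖ (1 : Matrix b b ℂ) := by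
    rw [conjTranspose_kronecker, ← mul_kronecker_mul, ← mul_kronecker_mul, mul_one,
      ← star_eq_conjTranspose V, mem_unitaryGroup_iff'.mp hV]
  calc (partialTraceRight ((U ⊗ₖ V) * ρ * (U ⊗ₖ V)ᴴ) * X).trace
      = (ρ * ((U ⊗ₖ V)ᴴ * (X ⊗ₖ 1) * (U ⊗ₖ V))).trace := by
        rw [trace_partialTraceRight_mul, mul_assoc, mul_assoc, trace_mul_comm, mul_assoc]
    _ = (U * partialTraceRight ρ * Uᴴ * X).trace := by
        rw [kronecker_conj, ← trace_partialTraceRight_mul, mul_assoc U, mul_assoc U,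
          trace_mul_comm U, mul_assoc, mul_assoc, mul_assoc]

theorem partialTraceLeft_unitary_conj [DecidableEq a] {U : Matrix a a ℂ} {V : Matrix b b ℂ}
    (hU : U ∈ unitaryGroup a ℂ) (ρ : Matrix (a × b) (a × b) ℂ) :
    partialTraceLeft ((U ⊗ₖ V) * ρ * (U ⊗ₖ V)ᴴ) = V * partialTraceLeft ρ * Vᴴ := by
  have swap_kronecker : (U ⊗ₖ V).submatrix (Equiv.prodComm b a) (Equiv.prodComm b a) = V ⊗ₖ U := by
    ext
    simp [mul_comm]
  simp only [partialTraceLeft_eq_partialTraceRight_submatrix]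
  rw [← submatrix_mul_equiv _ _ _ (Equiv.prodComm b a),
    ← submatrix_mul_equiv _ _ _ (Equiv.prodComm b a), ← conjTranspose_submatrix, swap_kronecker,
    partialTraceRight_unitary_conj hU]

variable [DecidableEq a] [DecidableEq b]

-- In eigenbases of the two marginals, the marginals of the diagonal of `ρ` are their spectra.
theorem vnEntropy_le_partialTraceRight_add_partialTraceLeft {ρ : Matrix (a × b) (a × b) ℂ}
    (hρ : IsDensity ρ) :
    vnEntropy ρ ≤ vnEntropy (partialTraceRight ρ) + vnEntropy (partialTraceLeft ρ) := by
  have right_isHermitian : (partialTraceRight ρ).IsHermitian :=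
    (partialTraceRight_posSemidef hρ.1).1
  have left_isHermitian : (partialTraceLeft ρ).IsHermitian :=
    (partialTraceLeft_posSemidef hρ.1).1
  obtain ⟨U, hU, p, hp⟩ := exists_unitary_conj_eq_diagonal right_isHermitian
  obtain ⟨V, hV, q, hq⟩ := exists_unitary_conj_eq_diagonal left_isHermitian
  let τ := (U ⊗ₖ V) * ρ * (U ⊗ₖ V)ᴴ
  have hUV : U ⊗ₖ V ∈ unitaryGroup (a × b) ℂ := kronecker_mem_unitary hU hV
  have τ_posSemidef : τ.PosSemidef := hρ.1.mul_mul_conjTranspose_same _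
  have τ_right : partialTraceRight τ = diagonal fun i => (p i : ℂ) := by
    rw [partialTraceRight_unitary_conj hV, hp]
  have τ_left : partialTraceLeft τ = diagonal fun j => (q j : ℂ) := by
    rw [partialTraceLeft_unitary_conj hU, hq]
  have p_eq (i : a) : ∑ j, (τ (i, j) (i, j)).re = p i := by
    simpa [partialTraceRight_apply] using congrArg Complex.re (congrFun₂ τ_right i i)
  have q_eq (j : b) : ∑ i, (τ (i, j) (i, j)).re = q j := by
    simpa [partialTraceLeft_apply] using congrArg Complex.re (congrFun₂ τ_left j j)
  have τ_trace : ∑ x, (τ x x).re = 1 := by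
    simpa [trace] using congrArg Complex.re ((trace_unitary_conj hUV ρ).trans hρ.2)
  calc vnEntropy ρ = vnEntropy τ := (vnEntropy_unitary_conj hρ.1.1 hUV).symm
    _ ≤ ∑ x, Real.negMulLog (τ x x).re := vnEntropy_le_sum_negMulLog_diag τ_posSemidef
    _ ≤ ∑ i, Real.negMulLog (p i) + ∑ j, Real.negMulLog (q j) := by
        simpa only [p_eq, q_eq] using sum_negMulLog_le_add_marginals
          (fun x => (Complex.le_def.mp τ_posSemidef.diag_nonneg).1) τ_trace
    _ = vnEntropy (partialTraceRight ρ) + vnEntropy (partialTraceLeft ρ) := by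
        rw [← vnEntropy_diagonal, ← vnEntropy_diagonal, ← hp, ← hq,
          vnEntropy_unitary_conj right_isHermitian hU,
          vnEntropy_unitary_conj left_isHermitian hV]

-- With `M i j = ψ (i, j)`, the two marginals are `M * Mᴴ` and `(Mᴴ * M)ᵀ`.
theorem vnEntropy_partialTraceRight_pure (ψ : a × b → ℂ) :
    vnEntropy (partialTraceRight (vecMulVec ψ (star ψ))) =
      vnEntropy (partialTraceLeft (vecMulVec ψ (star ψ))) := by
  let M : Matrix a b ℂ := of fun i j => ψ (i, j)
  have right_eq : partialTraceRight (vecMulVec ψ (star ψ)) = M * Mᴴ := by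
    ext i i'
    simp [partialTraceRight_apply, mul_apply, vecMulVec_apply, M]
  have left_eq : partialTraceLeft (vecMulVec ψ (star ψ)) = (Mᴴ * M)ᵀ := by
    ext j j'
    simp [partialTraceLeft_apply, mul_apply, vecMulVec_apply, M, mul_comm]
  rw [right_eq, left_eq, vnEntropy_transpose (isHermitian_conjTranspose_mul_self M),
    vnEntropy_mul_conjTranspose_comm]

end PartialTrace

section Density

variable {m n : Type*} [Fintype m] [Fintype n]

theorem IsDensity.sum_smul {ι : Type*} [Fintype ι] {p : ι → ℝ} {ρ : ι → Matrix n n ℂ}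
    (hp : ∀ i, 0 ≤ p i) (hp_sum : ∑ i, p i = 1) (hρ : ∀ i, IsDensity (ρ i)) :
    IsDensity (∑ i, p i • ρ i) := by
  refine ⟨posSemidef_sum _ fun i _ => (hρ i).1.smul (hp i), ?_⟩
  simp only [trace_sum, trace_smul, (hρ _).2]
  rw [← Finset.sum_smul, hp_sum, one_smul]

theorem IsDensity.submatrix_equiv {ρ : Matrix n n ℂ} (hρ : IsDensity ρ) (e : m ≃ n) :
    IsDensity (ρ.submatrix e e) :=
  ⟨hρ.1.submatrix e, (e.sum_comp fun i => ρ i i).trans hρ.2⟩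

theorem IsDensity.isometry_conj [DecidableEq n] {V : Matrix m n ℂ} (hV : Vᴴ * V = 1)
    {ρ : Matrix n n ℂ} (hρ : IsDensity ρ) : IsDensity (V * ρ * Vᴴ) :=
  ⟨hρ.1.mul_mul_conjTranspose_same V, by
    rw [trace_mul_comm, ← Matrix.mul_assoc, hV, Matrix.one_mul, hρ.2]⟩

theorem IsDensity.partialTraceRight {ρ : Matrix (m × n) (m × n) ℂ} (hρ : IsDensity ρ) :
    IsDensity (partialTraceRight ρ) :=
  ⟨partialTraceRight_posSemidef hρ.1, (trace_partialTraceRight ρ).trans hρ.2⟩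

theorem IsDensity.partialTraceLeft {ρ : Matrix (m × n) (m × n) ℂ} (hρ : IsDensity ρ) :
    IsDensity (partialTraceLeft ρ) :=
  ⟨partialTraceLeft_posSemidef hρ.1, (trace_partialTraceLeft ρ).trans hρ.2⟩

open scoped MatrixOrder Matrix.Norms.L2Operator in
theorem exists_eq_mul_conjTranspose_of_posSemidef {ρ : Matrix n n ℂ}
    (hρ : ρ.PosSemidef) : ∃ S : Matrix n n ℂ, ρ = S * Sᴴ := by
  classical
  exact CStarAlgebra.nonneg_iff_eq_mul_star_self.mp (nonneg_iff_posSemidef.mpr hρ)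

open scoped MatrixOrder Matrix.Norms.L2Operator in
theorem linearMap_ext_of_isDensity {M : Type*} [AddCommGroup M] [Module ℂ M]
    {F G : Matrix n n ℂ →ₗ[ℂ] M} (h : ∀ ρ, IsDensity ρ → F ρ = G ρ) : F = G := by
  classical
  refine LinearMap.ext_on CStarAlgebra.span_nonneg fun ρ hρ => ?_
  have ρ_posSemidef : ρ.PosSemidef := nonneg_iff_posSemidef.mp hρ
  by_cases trace_eq : ρ.trace = 0
  · rw [ρ_posSemidef.trace_eq_zero_iff.mp trace_eq, map_zero, map_zero]
  · have normalized : IsDensity (ρ.trace⁻¹ • ρ) :=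
      ⟨ρ_posSemidef.smul (inv_nonneg.mpr ρ_posSemidef.trace_nonneg), by
        rw [trace_smul, smul_eq_mul, inv_mul_cancel₀ trace_eq]⟩
    simpa [trace_eq] using h _ normalized

end Density

section Kraus

theorem partialTraceRight_conj_eq_sum {m n κ : Type*} [Fintype n] [Fintype κ]
    (V : Matrix (m × κ) n ℂ) (ρ : Matrix n n ℂ) :
    partialTraceRight (V * ρ * Vᴴ) =
      ∑ k, V.submatrix (·, k) id * ρ * (V.submatrix (·, k) id)ᴴ := by
  ext i i'
  rw [Matrix.sum_apply]
  rfl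

theorem partialTraceLeft_conj_apply {m n κ : Type*} [Fintype m] [Fintype n]
    (V : Matrix (m × κ) n ℂ) (ρ : Matrix n n ℂ) (k k' : κ) :
    partialTraceLeft (V * ρ * Vᴴ) k k' =
      (V.submatrix (·, k) id * ρ * (V.submatrix (·, k') id)ᴴ).trace :=
  rfl

theorem conjTranspose_mul_self_eq_sum {m n κ : Type*} [Fintype m] [Fintype κ]
    (V : Matrix (m × κ) n ℂ) :
    Vᴴ * V = ∑ k, (V.submatrix (·, k) id)ᴴ * V.submatrix (·, k) id := by
  ext i i'
  rw [Matrix.sum_apply, mul_apply, Fintype.sum_prod_type_right]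
  rfl

variable {l m n κ : Type*} [Fintype l] [Fintype m] [Fintype n] [DecidableEq n] [Fintype κ]

theorem IsCPTP.of_kraus {E : Matrix n n ℂ →ₗ[ℂ] Matrix m m ℂ} (K : κ → Matrix m n ℂ)
    (hE : ∀ ρ, E ρ = ∑ k, K k * ρ * (K k)ᴴ) (hK : ∑ k, (K k)ᴴ * K k = 1) : IsCPTP E := by
  let e := (Fintype.equivFin κ).symm
  refine ⟨Fintype.card κ, K ∘ e, fun ρ => ?_, ?_⟩
  · rw [hE, ← e.sum_comp]
    rfl
  · rw [← hK, ← e.sum_comp]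
    rfl

theorem IsCPTP.comp [DecidableEq m] {F : Matrix m m ℂ →ₗ[ℂ] Matrix l l ℂ}
    {E : Matrix n n ℂ →ₗ[ℂ] Matrix m m ℂ} (hF : IsCPTP F) (hE : IsCPTP E) :
    IsCPTP (F ∘ₗ E) := by
  obtain ⟨M, L, hF, hL⟩ := hF
  obtain ⟨N, K, hE, hK⟩ := hE
  refine .of_kraus (fun x : Fin M × Fin N => L x.1 * K x.2) (fun ρ => ?_) ?_
  · simp only [LinearMap.comp_apply, hF, hE, Fintype.sum_prod_type, Matrix.mul_sum,
      Matrix.sum_mul, conjTranspose_mul, Matrix.mul_assoc]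
  · calc ∑ x : Fin M × Fin N, (L x.1 * K x.2)ᴴ * (L x.1 * K x.2)
        = ∑ k, (K k)ᴴ * ((∑ j, (L j)ᴴ * L j) * K k) := by
          simp only [Fintype.sum_prod_type_right, Matrix.mul_sum, Matrix.sum_mul,
            conjTranspose_mul, Matrix.mul_assoc]
      _ = 1 := by simp only [hL, Matrix.one_mul, hK]

theorem isCPTP_partialTraceRight [DecidableEq m] [DecidableEq κ] :
    IsCPTP (partialTraceRight : Matrix (m × κ) (m × κ) ℂ →ₗ[ℂ] Matrix m m ℂ) := by
  refine .of_kraus (fun k => (1 : Matrix (m × κ) (m × κ) ℂ).submatrix (·, k) id) (fun ρ => ?_) ?_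
  · rw [← partialTraceRight_conj_eq_sum, conjTranspose_one, one_mul, mul_one]
  · rw [← conjTranspose_mul_self_eq_sum, conjTranspose_one, one_mul]

theorem isCPTP_reindex (e : n ≃ m) : IsCPTP (reindexLinearEquiv ℂ ℂ e e).toLinearMap := by
  refine .of_kraus (fun _ : Unit => (1 : Matrix n n ℂ).submatrix e.symm id) (fun ρ => ?_) ?_
  · ext
    simp [mul_apply, one_apply]
  · ext
    simp [one_apply]

theorem IsCPTP.exists_isometry {E : Matrix n n ℂ →ₗ[ℂ] Matrix m m ℂ} (hE : IsCPTP E) :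
    ∃ (N : ℕ) (V : Matrix (m × Fin N) n ℂ),
      Vᴴ * V = 1 ∧ ∀ ρ, E ρ = partialTraceRight (V * ρ * Vᴴ) := by
  obtain ⟨N, K, hE, hK⟩ := hE
  let V : Matrix (m × Fin N) n ℂ := of fun x h => K x.2 x.1 h
  exact ⟨N, V, (conjTranspose_mul_self_eq_sum V).trans hK,
    fun ρ => (hE ρ).trans (partialTraceRight_conj_eq_sum V ρ).symm⟩

-- `∑ k, [M k, ρ] * [M k, ρ]ᴴ = 0`, so every `M k` commutes with every `ρ`.
theorem eq_smul_one_of_sum_kraus_eq_self {M : κ → Matrix n n ℂ}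
    (hM : ∀ ρ : Matrix n n ℂ, ∑ k, M k * ρ * (M k)ᴴ = ρ) (k : κ) : ∃ z : ℂ, M k = z • 1 := by
  have sum_commutator (ρ : Matrix n n ℂ) :
      ∑ k, (M k * ρ - ρ * M k) * (M k * ρ - ρ * M k)ᴴ = 0 := by
    have expand (k : κ) : (M k * ρ - ρ * M k) * (M k * ρ - ρ * M k)ᴴ =
        M k * (ρ * ρᴴ) * (M k)ᴴ - M k * ρ * (M k)ᴴ * ρᴴ - ρ * (M k * ρᴴ * (M k)ᴴ) +
          ρ * (M k * 1 * (M k)ᴴ) * ρᴴ := by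
      rw [conjTranspose_sub, conjTranspose_mul, conjTranspose_mul]
      noncomm_ring
    simp only [expand, Finset.sum_add_distrib, Finset.sum_sub_distrib, ← Finset.sum_mul,
      ← Finset.mul_sum, hM]
    rw [mul_one]
    abel
  have commutator_eq_zero (ρ : Matrix n n ℂ) : M k * ρ - ρ * M k = 0 := by
    have sum_trace := congrArg trace (sum_commutator ρ)
    rw [trace_sum, trace_zero, Finset.sum_eq_zero_iff_of_nonneg fun k _ =>
      (posSemidef_self_mul_conjTranspose _).trace_nonneg] at sum_trace
    exact trace_mul_conjTranspose_self_eq_zero_iff.mp (sum_trace k (Finset.mem_univ k))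
  obtain ⟨z, hz⟩ := mem_range_scalar_of_commute_single fun i j _ =>
    (sub_eq_zero.mp (commutator_eq_zero (single i j 1))).symm
  exact ⟨z, by rw [← hz, scalar_apply, smul_one_eq_diagonal]⟩

/- The Kraus operators `K r * L k` of the identity channel are scalars `z (r, k)`, and the
environment state has entries `∑ r, tr ((K r * L k) * ρ * (K r * L k')ᴴ)`. -/
theorem exists_partialTraceLeft_eq_trace_smul {m n κ : Type*} [Fintype m] [DecidableEq m]
    [Fintype n] [Fintype κ] {V : Matrix (m × κ) n ℂ} {R : Matrix m m ℂ →ₗ[ℂ] Matrix n n ℂ}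
    (hR : IsCPTP R) (hrev : ∀ ρ : Matrix n n ℂ, R (partialTraceRight (V * ρ * Vᴴ)) = ρ) :
    ∃ δ : Matrix κ κ ℂ, ∀ ρ : Matrix n n ℂ, partialTraceLeft (V * ρ * Vᴴ) = ρ.trace • δ := by
  classical
  obtain ⟨N, K, hK, hK_sum⟩ := hR
  let L (k : κ) : Matrix m n ℂ := V.submatrix (·, k) id
  have kraus_identity (ρ : Matrix n n ℂ) :
      ∑ x : Fin N × κ, (K x.1 * L x.2) * ρ * (K x.1 * L x.2)ᴴ = ρ := by
    conv_rhs => rw [← hrev ρ, hK, partialTraceRight_conj_eq_sum]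
    simp only [Fintype.sum_prod_type, Matrix.mul_sum, Matrix.sum_mul, conjTranspose_mul,
      Matrix.mul_assoc, L]
  choose z hz using eq_smul_one_of_sum_kraus_eq_self kraus_identity
  refine ⟨of fun k k' => ∑ r, z (r, k) * star (z (r, k')), fun ρ => ?_⟩
  ext k k'
  calc partialTraceLeft (V * ρ * Vᴴ) k k'
      = ((∑ r, (K r)ᴴ * K r) * (L k * ρ * (L k')ᴴ)).trace := by
        rw [hK_sum, Matrix.one_mul, partialTraceLeft_conj_apply]
    _ = ∑ r, ((K r * L k) * ρ * (K r * L k')ᴴ).trace := by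
        rw [Matrix.sum_mul, trace_sum]
        refine Finset.sum_congr rfl fun r _ => ?_
        rw [Matrix.mul_assoc, trace_mul_comm, conjTranspose_mul]
        simp only [Matrix.mul_assoc]
    _ = ∑ r, z (r, k) * star (z (r, k')) * ρ.trace := by
        refine Finset.sum_congr rfl fun r _ => ?_
        rw [hz (r, k), hz (r, k')]
        simp [mul_assoc, mul_left_comm]
    _ = ρ.trace * ∑ r, z (r, k) * star (z (r, k')) := by rw [← Finset.sum_mul, mul_comm]

end Kraus

section TripartiteTrace

/-- The equivalence swapping the last two factors, used to regroup a tripartite system. -/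
def rightCommEquiv (a c b : Type*) : (a × c) × b ≃ (a × b) × c where
  toFun x := ((x.1.1, x.2), x.1.2)
  invFun x := ((x.1.1, x.2), x.1.2)

variable {a b c R : Type*} [Semiring R] (M : Matrix ((a × b) × c) ((a × b) × c) R)

theorem partialTraceLeft_submatrix_rightComm [Fintype a] [Fintype c] :
    partialTraceLeft (M.submatrix (rightCommEquiv a c b) (rightCommEquiv a c b)) =
      partialTraceLeft (partialTraceRight M) := by
  ext
  exact Fintype.sum_prod_type _

theorem partialTraceLeft_partialTraceRight_submatrix_rightComm [Fintype a] [Fintype b] :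
    partialTraceLeft (partialTraceRight
      (M.submatrix (rightCommEquiv a c b) (rightCommEquiv a c b))) = partialTraceLeft M := by
  ext k k'
  exact (Fintype.sum_prod_type fun x : a × b => M (x, k) (x, k')).symm

theorem partialTraceRight_partialTraceRight_submatrix_rightComm [Fintype b] [Fintype c] :
    partialTraceRight (partialTraceRight
      (M.submatrix (rightCommEquiv a c b) (rightCommEquiv a c b))) =
      partialTraceRight (partialTraceRight M) := by
  ext
  exact Finset.sum_comm

end TripartiteTrace

section Decoupling

variable {n a b c : Type*} [Fintype n] [DecidableEq n] [Fintype a] [DecidableEq a] [Fintype b]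
  [Fintype c]

open scoped Kronecker

/- For `σ = S * Sᴴ`, the vector `(V ⊗ 1) S` purifies `V * σ * Vᴴ` with a reference copy of `n`,
and its marginal on the reference and `c` is the product `(Sᴴ * S)ᵀ ⊗ₖ δ`. -/
theorem vnEntropy_partialTraceRight_conj_of_decoupled [DecidableEq c] {V : Matrix (a × c) n ℂ}
    (hV : Vᴴ * V = 1) {δ : Matrix c c ℂ}
    (hδ : ∀ ρ : Matrix n n ℂ, partialTraceLeft (V * ρ * Vᴴ) = ρ.trace • δ)
    {σ : Matrix n n ℂ} (hσ : IsDensity σ) :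
    vnEntropy (partialTraceRight (V * σ * Vᴴ)) = vnEntropy σ + vnEntropy δ := by
  have δ_density : IsDensity δ := by
    simpa [hδ, hσ.2] using (hσ.isometry_conj hV).partialTraceLeft
  obtain ⟨S, rfl⟩ := exists_eq_mul_conjTranspose_of_posSemidef hσ.1
  have transpose_trace : (Sᴴ * S)ᵀ.trace = 1 := by rw [trace_transpose, trace_mul_comm, hσ.2]
  let ψ : a × n × c → ℂ := fun x => (V * S) (x.1, x.2.2) x.2.1
  have right_eq : partialTraceRight (V * (S * Sᴴ) * Vᴴ) =
      partialTraceRight (vecMulVec ψ (star ψ)) := by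
    have factor : V * (S * Sᴴ) * Vᴴ = (V * S) * (V * S)ᴴ := by
      simp only [conjTranspose_mul, Matrix.mul_assoc]
    ext i i'
    simp only [factor, partialTraceRight_apply, Fintype.sum_prod_type_right]
    rfl
  have left_eq : partialTraceLeft (vecMulVec ψ (star ψ)) = (Sᴴ * S)ᵀ ⊗ₖ δ := by
    ext ⟨r, k⟩ ⟨r', k'⟩
    let ρ : Matrix n n ℂ := vecMulVec (S.col r) (star (S.col r'))
    have conj_ρ : V * ρ * Vᴴ = vecMulVec (V *ᵥ S.col r) (star (V *ᵥ S.col r')) := by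
      rw [mul_vecMulVec, vecMulVec_mul, star_mulVec]
    calc partialTraceLeft (vecMulVec ψ (star ψ)) (r, k) (r', k')
        = partialTraceLeft (V * ρ * Vᴴ) k k' := by rw [conj_ρ]; rfl
      _ = (star (S.col r') ⬝ᵥ S.col r) * δ k k' := by
        rw [hδ, trace_vecMulVec, dotProduct_comm]
        rfl
  rw [right_eq, vnEntropy_partialTraceRight_pure, left_eq,
    vnEntropy_kronecker (isHermitian_conjTranspose_mul_self S).transpose δ_density.1.1
      transpose_trace δ_density.2,
    vnEntropy_transpose (isHermitian_conjTranspose_mul_self S), vnEntropy_mul_conjTranspose_comm]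

/- Subadditivity for `a, b` and for `a, c` gives `H(σ) + H(γ) ≤ H(a) + H(β)` and
`H(σ) + H(β) ≤ H(a) + H(γ)`; the result is their sum. -/
theorem vnEntropy_le_partialTraceRight_of_decoupled {V : Matrix ((a × b) × c) n ℂ}
    (hV : Vᴴ * V = 1) {β : Matrix b b ℂ} {γ : Matrix c c ℂ}
    (hβ : ∀ ρ : Matrix n n ℂ,
      partialTraceLeft (partialTraceRight (V * ρ * Vᴴ)) = ρ.trace • β)
    (hγ : ∀ ρ : Matrix n n ℂ, partialTraceLeft (V * ρ * Vᴴ) = ρ.trace • γ)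
    {σ : Matrix n n ℂ} (hσ : IsDensity σ) :
    vnEntropy σ ≤ vnEntropy (partialTraceRight (partialTraceRight (V * σ * Vᴴ))) := by
  classical
  let e := rightCommEquiv a c b
  let V' : Matrix ((a × c) × b) n ℂ := V.submatrix e id
  have hV' : V'ᴴ * V' = 1 := by
    rw [conjTranspose_submatrix, submatrix_mul_equiv, hV, submatrix_id_id]
  have V'_conj (ρ : Matrix n n ℂ) : V' * ρ * V'ᴴ = (V * ρ * Vᴴ).submatrix e e := rfl
  have V'_decoupled (ρ : Matrix n n ℂ) : partialTraceLeft (V' * ρ * V'ᴴ) = ρ.trace • β := by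
    rw [V'_conj, partialTraceLeft_submatrix_rightComm, hβ]
  have entropy_ab := vnEntropy_le_partialTraceRight_add_partialTraceLeft
    (hσ.isometry_conj hV).partialTraceRight
  rw [vnEntropy_partialTraceRight_conj_of_decoupled hV hγ hσ, hβ, hσ.2, one_smul] at entropy_ab
  have entropy_ac := vnEntropy_le_partialTraceRight_add_partialTraceLeft
    (hσ.isometry_conj hV').partialTraceRight
  rw [vnEntropy_partialTraceRight_conj_of_decoupled hV' V'_decoupled hσ, V'_conj,
    partialTraceLeft_partialTraceRight_submatrix_rightComm,
    partialTraceRight_partialTraceRight_submatrix_rightComm, hγ, hσ.2, one_smul] at entropy_ac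
  linarith

theorem IsCPTP.vnEntropy_le_partialTraceRight_of_reversible [DecidableEq b]
    {E : Matrix n n ℂ →ₗ[ℂ] Matrix (a × b) (a × b) ℂ} (hE : IsCPTP E)
    {R : Matrix (a × b) (a × b) ℂ →ₗ[ℂ] Matrix n n ℂ} (hR : IsCPTP R)
    (hrev : ∀ ρ, IsDensity ρ → R (E ρ) = ρ)
    {β : Matrix b b ℂ} (hβ : ∀ ρ, IsDensity ρ → partialTraceLeft (E ρ) = β)
    {σ : Matrix n n ℂ} (hσ : IsDensity σ) :
    vnEntropy σ ≤ vnEntropy (partialTraceRight (E σ)) := by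
  have hrev_all : R ∘ₗ E = LinearMap.id := linearMap_ext_of_isDensity hrev
  have hβ_all : partialTraceLeft ∘ₗ E = (traceLinearMap n ℂ ℂ).smulRight β :=
    linearMap_ext_of_isDensity fun ρ hρ => by simp [hβ ρ hρ, hρ.2]
  obtain ⟨N, V, hV, hEV⟩ := hE.exists_isometry
  obtain ⟨γ, hγ⟩ := exists_partialTraceLeft_eq_trace_smul (V := V) hR fun ρ => by
    rw [← hEV]
    exact LinearMap.congr_fun hrev_all ρ
  rw [hEV]
  refine vnEntropy_le_partialTraceRight_of_decoupled hV (β := β) (fun ρ => ?_) hγ hσ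
  rw [← hEV]
  exact LinearMap.congr_fun hβ_all ρ

end Decoupling

section Shares

/-- Gluing of dependent functions on disjoint index sets `P` and `Q` with union `T`. -/
def piGlueEquiv {ι : Type*} {α : ι → Type*} {P Q T : ι → Prop} [DecidablePred P]
    (hT : ∀ i, T i ↔ P i ∨ Q i) (hPQ : ∀ i, P i → ¬Q i) :
    ((∀ i : {i // P i}, α i) × (∀ i : {i // Q i}, α i)) ≃ ∀ i : {i // T i}, α i where
  toFun f i := if h : P i then f.1 ⟨i, h⟩ else f.2 ⟨i, ((hT i).mp i.2).resolve_left h⟩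
  invFun f := (fun i => f ⟨i, (hT i).mpr (.inl i.2)⟩, fun i => f ⟨i, (hT i).mpr (.inr i.2)⟩)
  left_inv f := by
    refine Prod.ext (funext fun i => ?_) (funext fun i => ?_)
    · simp [i.2]
    · simp [mt (hPQ i) (not_not.mpr i.2)]
  right_inv f := by
    funext i
    by_cases h : P i <;> simp [h]

/-- The split of the share system `S ∪ T` into the systems `S` and `T`. -/
def shareUnionEquiv (d : Fin nn → Type) {S T : Finset (Fin nn)} (hST : Disjoint S T) :
    ((∀ i : {i // i ∈ S}, d i) × (∀ i : {i // i ∈ T}, d i)) ≃ ∀ i : {i // i ∈ S ∪ T}, d i :=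
  piGlueEquiv (fun _ => Finset.mem_union) fun _ hS => Finset.disjoint_left.mp hST hS

omit [∀ i, DecidableEq (d i)] in
theorem partialTraceRight_ptraceSubset_union {S T : Finset (Fin nn)} (hST : Disjoint S T)
    (M : Matrix (∀ i, d i) (∀ i, d i) ℂ) :
    partialTraceRight
      ((ptraceSubset (S ∪ T) M).submatrix (shareUnionEquiv d hST) (shareUnionEquiv d hST)) =
      ptraceSubset S M := by
  have not_mem_iff (i : Fin nn) : i ∉ S ↔ i ∈ T ∨ i ∉ S ∪ T := by
    grind [Finset.disjoint_left]
  let e : ((∀ i : {i // i ∈ T}, d i) × (∀ i : {i // i ∉ S ∪ T}, d i)) ≃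
      ∀ i : {i // i ∉ S}, d i := piGlueEquiv not_mem_iff (by grind)
  have mergeFun_eq (s : ∀ i : {i // i ∈ S}, d i) (t : ∀ i : {i // i ∈ T}, d i)
      (z : ∀ i : {i // i ∉ S ∪ T}, d i) :
      mergeFun S s (e (t, z)) = mergeFun (S ∪ T) (shareUnionEquiv d hST (s, t)) z := by
    funext i
    by_cases hS : i ∈ S <;> by_cases hT : i ∈ T <;>
      simp [mergeFun, e, shareUnionEquiv, piGlueEquiv, hS, hT]
  ext f g
  simp only [ptraceSubset, ← e.sum_comp, Fintype.sum_prod_type, mergeFun_eq]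
  rfl

omit [∀ i, DecidableEq (d i)] in
theorem partialTraceLeft_ptraceSubset_union {S T : Finset (Fin nn)} (hST : Disjoint S T)
    (M : Matrix (∀ i, d i) (∀ i, d i) ℂ) :
    partialTraceLeft
      ((ptraceSubset (S ∪ T) M).submatrix (shareUnionEquiv d hST) (shareUnionEquiv d hST)) =
      ptraceSubset T M := by
  have not_mem_iff (i : Fin nn) : i ∉ T ↔ i ∈ S ∨ i ∉ S ∪ T := by
    grind [Finset.disjoint_left]
  let e : ((∀ i : {i // i ∈ S}, d i) × (∀ i : {i // i ∉ S ∪ T}, d i)) ≃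
      ∀ i : {i // i ∉ T}, d i := piGlueEquiv not_mem_iff (by grind)
  have mergeFun_eq (s : ∀ i : {i // i ∈ S}, d i) (t : ∀ i : {i // i ∈ T}, d i)
      (z : ∀ i : {i // i ∉ S ∪ T}, d i) :
      mergeFun T t (e (s, z)) = mergeFun (S ∪ T) (shareUnionEquiv d hST (s, t)) z := by
    funext i
    by_cases hT : i ∈ T
    · simp [mergeFun, shareUnionEquiv, piGlueEquiv, Finset.disjoint_right.mp hST hT, hT]
    · by_cases hS : i ∈ S <;> simp [mergeFun, e, shareUnionEquiv, piGlueEquiv, hS, hT]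
  ext f g
  simp only [ptraceSubset, ← e.sum_comp, Fintype.sum_prod_type, mergeFun_eq]
  rfl

/-- `ptraceSubset` as a linear map: split off the shares outside `X` and trace them out. -/
def ptraceSubsetLinearMap (X : Finset (Fin nn)) :
    Matrix (∀ i, d i) (∀ i, d i) ℂ →ₗ[ℂ]
      Matrix (∀ i : {i // i ∈ X}, d i) (∀ i : {i // i ∈ X}, d i) ℂ :=
  partialTraceRight ∘ₗ (reindexLinearEquiv ℂ ℂ (Equiv.piEquivPiSubtypeProd (· ∈ X) d)
    (Equiv.piEquivPiSubtypeProd (· ∈ X) d)).toLinearMap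

omit [∀ i, DecidableEq (d i)] in
theorem ptraceSubsetLinearMap_apply (X : Finset (Fin nn)) (M : Matrix (∀ i, d i) (∀ i, d i) ℂ) :
    ptraceSubsetLinearMap X M = ptraceSubset X M :=
  rfl

theorem isCPTP_ptraceSubsetLinearMap (X : Finset (Fin nn)) :
    IsCPTP (ptraceSubsetLinearMap (d := d) X) :=
  isCPTP_partialTraceRight.comp (isCPTP_reindex _)

omit [∀ i, DecidableEq (d i)] [DecidableEq H] in
theorem Forbidden.mono {W : Matrix H H ℂ →ₗ[ℂ] Matrix (∀ i, d i) (∀ i, d i) ℂ}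
    {Y Z : Finset (Fin nn)} (hY : Forbidden W Y) (hZY : Z ⊆ Y) : Forbidden W Z := by
  rw [← Finset.union_sdiff_of_subset hZY] at hY
  obtain ⟨ρ₀, hρ₀, hW⟩ := hY
  let e := shareUnionEquiv d (Finset.disjoint_sdiff (s := Z) (t := Y))
  refine ⟨partialTraceRight (ρ₀.submatrix e e), (hρ₀.submatrix_equiv e).partialTraceRight,
    fun ρ hρ => ?_⟩
  rw [← hW ρ hρ, partialTraceRight_ptraceSubset_union]

theorem vnEntropy_le_ptraceSubset_of_disjoint
    {W : Matrix H H ℂ →ₗ[ℂ] Matrix (∀ i, d i) (∀ i, d i) ℂ} (hW : IsCPTP W)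
    {X Y : Finset (Fin nn)} (hXY : Disjoint X Y) (hY : Forbidden W Y)
    (hqual : Qualified W (X ∪ Y)) {σ : Matrix H H ℂ} (hσ : IsDensity σ) :
    vnEntropy σ ≤ vnEntropy (ptraceSubset X (W σ)) := by
  obtain ⟨ρ₀, -, hρ₀⟩ := hY
  obtain ⟨R, hR, hrev⟩ := hqual
  let e := shareUnionEquiv d hXY
  let split := (reindexLinearEquiv ℂ ℂ e.symm e.symm).toLinearMap
  have hE : IsCPTP (split ∘ₗ ptraceSubsetLinearMap (X ∪ Y) ∘ₗ W) :=
    (isCPTP_reindex _).comp ((isCPTP_ptraceSubsetLinearMap _).comp hW)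
  rw [← partialTraceRight_ptraceSubset_union hXY]
  have split_reversible (ρ : Matrix H H ℂ) (hρ : IsDensity ρ) :
      (R ∘ₗ (reindexLinearEquiv ℂ ℂ e e).toLinearMap)
        ((split ∘ₗ ptraceSubsetLinearMap (X ∪ Y) ∘ₗ W) ρ) = ρ := by
    simpa [split, ptraceSubsetLinearMap_apply] using hrev ρ hρ
  exact hE.vnEntropy_le_partialTraceRight_of_reversible (hR.comp (isCPTP_reindex e))
    split_reversible (fun ρ hρ => (partialTraceLeft_ptraceSubset_union hXY _).trans (hρ₀ ρ hρ)) hσ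

theorem stmt_16_general {W : Matrix H H ℂ →ₗ[ℂ] Matrix (∀ i, d i) (∀ i, d i) ℂ} (hW : IsCPTP W)
    {X : Finset (Fin nn)} (hsig : ∃ Y : Finset (Fin nn), Forbidden W Y ∧ Qualified W (X ∪ Y))
    {σ : Matrix H H ℂ} (hσ : IsDensity σ) :
    vnEntropy σ ≤ vnEntropy (ptraceSubset X (W σ)) := by
  obtain ⟨Y, hY, hXY⟩ := hsig
  rw [← Finset.union_sdiff_self_eq_union] at hXY
  exact vnEntropy_le_ptraceSubset_of_disjoint hW Finset.disjoint_sdiff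
    (hY.mono Finset.sdiff_subset) hXY hσ

end Shares

/-- For any QSS scheme `W_N` (a CPTP, globally reversible encoding) and any significant
set `X` (there is a forbidden `Y` with `X ∪ Y` qualified), and every (finitely
supported) probability measure `μ = (p, ρs)` on pure states with barycenter `σ_μ`:
`H(σ_μ) ≤ H(W_X(σ_μ))`. -/
theorem stmt_16
    (W : Matrix H H ℂ →ₗ[ℂ] Matrix ((i : Fin nn) → d i) ((i : Fin nn) → d i) ℂ)
    (hW : IsCPTP W) (hrev : Qualified W Finset.univ)
    (X : Finset (Fin nn))
    (hsig : ∃ Y : Finset (Fin nn), Forbidden W Y ∧ Qualified W (X ∪ Y))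
    {ι : Type*} [Fintype ι] (p : ι → ℝ) (hp : ∀ i, 0 ≤ p i) (hp1 : ∑ i, p i = 1)
    (ρs : ι → Matrix H H ℂ) (hρs : ∀ i, IsPure (ρs i)) :
    vnEntropy (∑ j, p j • ρs j) ≤ vnEntropy (ptraceSubset X (W (∑ j, p j • ρs j))) :=
  stmt_16_general hW hsig (IsDensity.sum_smul hp hp1 fun i => (hρs i).1)
end
end

section
/- For any quantum secret sharing scheme W_N and any significant share i ∈ N (a share i such that {i} ∪ Y is qualified for some forbidden set Y), the dimension of the share system is at least the dimension of the secret: dim H ≤ dim H_i. -/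
open Matrix
open scoped ComplexOrder

noncomputable section

variable {nn : ℕ} {d : Fin nn → Type} [∀ i, Fintype (d i)] [∀ i, DecidableEq (d i)]
variable {H : Type} [Fintype H] [DecidableEq H]

/-!
The argument replaces the entropy bound by the trace of a superoperator, which is `(dim H)²` for the
identity channel and nonnegative for every completely positive map.

Let `E` encode `H` into `A ⊗ B` with constant marginal `σ` on `B`, and let `D` decode. The
Pimsner-Popa inequality says that `dim A • (1_A ⊗ tr_A ·) - id` is completely positive. Hence so is
`dim A • D (1_A ⊗ tr_A (E ·)) - D (E ·) = dim A • tr(·) D (1_A ⊗ σ) - id`, and taking traces gives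
`0 ≤ (dim A)² - (dim H)²`. Here `A` is the significant share and `B` the forbidden set.
-/

section KrausCone

variable {l m n ι : Type*} [Fintype n]

/-- The map `M ↦ K M Kᴴ`, i.e. the completely positive map with the single Kraus operator `K`. -/
def conjMap (K : Matrix m n ℂ) : Matrix n n ℂ →ₗ[ℂ] Matrix m m ℂ :=
  mulRightLinearMap m ℂ Kᴴ ∘ₗ mulLeftLinearMap n ℂ K

@[simp]
theorem conjMap_apply (K : Matrix m n ℂ) (M : Matrix n n ℂ) : conjMap K M = K * M * Kᴴ := rfl

theorem conjMap_one [DecidableEq n] : conjMap (1 : Matrix n n ℂ) = LinearMap.id := by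
  ext1 M
  simp

theorem conjMap_comp [Fintype m] (L : Matrix l m ℂ) (K : Matrix m n ℂ) :
    conjMap L ∘ₗ conjMap K = conjMap (L * K) := by
  ext1 M
  simp [Matrix.mul_assoc]

theorem trace_conjMap (K : Matrix n n ℂ) :
    LinearMap.trace ℂ _ (conjMap K) = K.trace * star K.trace := by
  classical
  calc LinearMap.trace ℂ _ (conjMap K)
      = ∑ p : n × n, conjMap K (single p.1 p.2 1) p.1 p.2 := by
        rw [LinearMap.trace_eq_matrix_trace ℂ (stdBasis ℂ n n)]
        simp [Matrix.trace, LinearMap.toMatrix_apply, stdBasis, single_eq_of_single_single]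
    _ = ∑ p : n × n, K p.1 p.1 * star (K p.2 p.2) := by
        simp [single_eq_single_vecMulVec_single, mul_vecMulVec, vecMulVec_mul, vecMulVec_apply]
    _ = K.trace * star K.trace := by
        rw [Fintype.sum_prod_type, Matrix.trace, star_sum, Finset.sum_mul_sum]
        rfl

variable (m n) in
/-- The completely positive maps, as the cone of the maps with a Kraus representation. The
difference `E - F` lies in it when `E` dominates `F` in the completely positive order. -/
def krausCone : AddSubmonoid (Matrix n n ℂ →ₗ[ℂ] Matrix m m ℂ) :=
  AddSubmonoid.closure (Set.range conjMap)

theorem conjMap_mem_krausCone (K : Matrix m n ℂ) : conjMap K ∈ krausCone m n :=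
  AddSubmonoid.subset_closure ⟨K, rfl⟩

theorem comp_mem_krausCone [Fintype m] {D : Matrix m m ℂ →ₗ[ℂ] Matrix l l ℂ}
    {E : Matrix n n ℂ →ₗ[ℂ] Matrix m m ℂ} (hD : D ∈ krausCone l m) (hE : E ∈ krausCone m n) :
    D ∘ₗ E ∈ krausCone l n := by
  induction hD using AddSubmonoid.closure_induction with
  | zero => simp
  | add D₁ D₂ _ _ h₁ h₂ => exact LinearMap.add_comp E D₂ D₁ ▸ add_mem h₁ h₂
  | mem _ hD =>
    obtain ⟨L, rfl⟩ := hD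
    induction hE using AddSubmonoid.closure_induction with
    | zero => simp
    | add E₁ E₂ _ _ h₁ h₂ => exact LinearMap.comp_add E₁ E₂ (conjMap L) ▸ add_mem h₁ h₂
    | mem _ hE =>
      obtain ⟨K, rfl⟩ := hE
      exact conjMap_comp L K ▸ conjMap_mem_krausCone _

theorem trace_nonneg_of_mem_krausCone {E : Matrix n n ℂ →ₗ[ℂ] Matrix n n ℂ}
    (hE : E ∈ krausCone n n) : 0 ≤ LinearMap.trace ℂ _ E := by
  induction hE using AddSubmonoid.closure_induction with
  | mem _ hE =>
    obtain ⟨K, rfl⟩ := hE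
    exact trace_conjMap K ▸ mul_star_self_nonneg _
  | zero => simp
  | add _ _ _ _ h₁ h₂ => simpa only [map_add] using add_nonneg h₁ h₂

/-- A Cauchy-Schwarz inequality in the completely positive order. -/
theorem card_nsmul_sum_conjMap_sub_mem_krausCone (s : Finset ι) (K : ι → Matrix m n ℂ) :
    s.card • ∑ x ∈ s, conjMap (K x) - conjMap (∑ x ∈ s, K x) ∈ krausCone m n := by
  induction s using Finset.cons_induction with
  | empty =>
    have h : conjMap (0 : Matrix m n ℂ) = 0 := by
      ext1 M
      simp
    simp [h]
  | cons a s ha ih =>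
    have h : (s.card + 1) • (conjMap (K a) + ∑ x ∈ s, conjMap (K x))
          - conjMap (K a + ∑ x ∈ s, K x)
        = (s.card • ∑ x ∈ s, conjMap (K x) - conjMap (∑ x ∈ s, K x))
          + ∑ x ∈ s, conjMap (K a - K x) := by
      ext1 M
      simp only [LinearMap.sub_apply, LinearMap.add_apply, LinearMap.smul_apply,
        LinearMap.sum_apply, conjMap_apply, conjTranspose_add, conjTranspose_sub,
        conjTranspose_sum, Matrix.add_mul, Matrix.mul_add, Matrix.sub_mul, Matrix.mul_sub,
        Matrix.sum_mul, Matrix.mul_sum, Finset.sum_add_distrib, Finset.sum_sub_distrib,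
        Finset.sum_const, succ_nsmul, smul_add]
      abel
    rw [Finset.card_cons, Finset.sum_cons, Finset.sum_cons, h]
    exact add_mem ih (sum_mem fun x _ => conjMap_mem_krausCone _)

theorem IsCPTP.mem_krausCone [Fintype m] [DecidableEq n] {E : Matrix n n ℂ →ₗ[ℂ] Matrix m m ℂ}
    (hE : IsCPTP E) : E ∈ krausCone m n := by
  obtain ⟨N, K, hK, -⟩ := hE
  have hE : E = ∑ a, conjMap (K a) := by
    ext1 M
    simp [hK]
  exact hE ▸ sum_mem fun a _ => conjMap_mem_krausCone (K a)

theorem IsCPTP.trace_apply [Fintype m] [DecidableEq n] {E : Matrix n n ℂ →ₗ[ℂ] Matrix m m ℂ}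
    (hE : IsCPTP E) (M : Matrix n n ℂ) : (E M).trace = M.trace := by
  obtain ⟨N, K, hK, hK_one⟩ := hE
  calc (E M).trace = ∑ a, ((K a)ᴴ * K a * M).trace := by
        simp only [hK, trace_sum, trace_mul_cycle (K _) M]
    _ = M.trace := by rw [← trace_sum, ← Matrix.sum_mul, hK_one, Matrix.one_mul]

end KrausCone

section Density

variable {n V : Type*} [Fintype n] [AddCommGroup V] [Module ℂ V]

open scoped Matrix.Norms.L2Operator MatrixOrder in
theorem linearMap_ext_of_isDensity_s17 {f g : Matrix n n ℂ →ₗ[ℂ] V}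
    (h : ∀ ρ, IsDensity ρ → f ρ = g ρ) : f = g := by
  classical
  refine LinearMap.ext_on CStarAlgebra.span_nonneg fun M hM => ?_
  have hM : M.PosSemidef := Matrix.nonneg_iff_posSemidef.mp hM
  obtain ht | ht := eq_or_ne M.trace 0
  · simp [hM.trace_eq_zero_iff.mp ht]
  · have hρ : IsDensity (M.trace⁻¹ • M) :=
      ⟨hM.smul (inv_nonneg.mpr hM.trace_nonneg), by simp [ht]⟩
    simpa [ht] using h _ hρ

end Density

section PartialTrace

variable {a b n : Type*} [DecidableEq n]

/-- The operator `⟨x| ⊗ 1`, where the system `n` is split into `a` and `b` by `e`. -/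
def braMatrix (e : a × b ≃ n) (x : a) : Matrix b n ℂ :=
  (1 : Matrix n n ℂ).submatrix (fun j => e (x, j)) id

theorem braMatrix_mul_conjTranspose [Fintype n] [DecidableEq b] (e : a × b ≃ n) (x : a) :
    braMatrix e x * (braMatrix e x)ᴴ = 1 := by
  ext j k
  simp [braMatrix, Matrix.mul_apply, Matrix.one_apply, eq_comm]

theorem sum_conjTranspose_mul_braMatrix [Fintype a] [Fintype b] (e : a × b ≃ n) :
    ∑ x, (braMatrix e x)ᴴ * braMatrix e x = 1 := by
  classical
  ext p q
  obtain ⟨s, rfl⟩ := e.surjective p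
  obtain ⟨t, rfl⟩ := e.surjective q
  calc (∑ x, (braMatrix e x)ᴴ * braMatrix e x) (e s) (e t)
      = ∑ r : a × b, (if s = r then 1 else 0) * (if r = t then 1 else 0) := by
        simp only [Matrix.sum_apply, Matrix.mul_apply, braMatrix, Matrix.one_apply,
          conjTranspose_apply, submatrix_apply, id_eq, Fintype.sum_prod_type, apply_ite star,
          star_one, star_zero, e.apply_eq_iff_eq, eq_comm]
    _ = (1 : Matrix n n ℂ) (e s) (e t) := by simp [Matrix.one_apply]

variable [Fintype a] [Fintype n]

/-- The partial trace over the factor `a` of a system `n` split into `a` and `b` by `e`. -/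
def partialTrace (e : a × b ≃ n) : Matrix n n ℂ →ₗ[ℂ] Matrix b b ℂ :=
  ∑ x, conjMap (braMatrix e x)

theorem partialTrace_mem_krausCone (e : a × b ≃ n) : partialTrace e ∈ krausCone b n :=
  sum_mem fun x _ => conjMap_mem_krausCone (braMatrix e x)

theorem partialTrace_apply (e : a × b ≃ n) (M : Matrix n n ℂ) (j k : b) :
    partialTrace e M j k = ∑ x, M (e (x, j)) (e (x, k)) := by
  simp [partialTrace, Matrix.sum_apply, braMatrix, Matrix.mul_apply, Matrix.one_apply]

variable [Fintype b]

protected theorem IsDensity.partialTrace {ρ : Matrix n n ℂ} (hρ : IsDensity ρ) (e : a × b ≃ n) :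
    IsDensity (partialTrace e ρ) := by
  refine ⟨?_, ?_⟩
  · simp only [partialTrace, LinearMap.sum_apply, conjMap_apply]
    exact posSemidef_sum _ fun x _ => hρ.1.mul_mul_conjTranspose_same _
  · calc (partialTrace e ρ).trace
        = ∑ x, ((braMatrix e x)ᴴ * braMatrix e x * ρ).trace := by
          simp [partialTrace, trace_sum, trace_mul_cycle (braMatrix e _) ρ]
      _ = 1 := by
          rw [← trace_sum, ← Matrix.sum_mul, sum_conjTranspose_mul_braMatrix, Matrix.one_mul, hρ.2]

/-- The map `N ↦ 1 ⊗ N` from operators on `b` to operators on the system `n` split into `a` and `b`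
by `e`. -/
def tensorOne (e : a × b ≃ n) : Matrix b b ℂ →ₗ[ℂ] Matrix n n ℂ :=
  ∑ x, conjMap (braMatrix e x)ᴴ

theorem trace_tensorOne (e : a × b ≃ n) (N : Matrix b b ℂ) :
    (tensorOne e N).trace = Fintype.card a * N.trace := by
  classical
  simp [tensorOne, trace_sum, trace_mul_cycle (braMatrix e _)ᴴ, braMatrix_mul_conjTranspose]

/-- The Pimsner-Popa inequality. -/
theorem card_nsmul_tensorOne_comp_partialTrace_sub_id_mem_krausCone (e : a × b ≃ n) :
    Fintype.card a • (tensorOne e ∘ₗ partialTrace e) - LinearMap.id ∈ krausCone n n := by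
  classical
  let P (x y : a) : Matrix n n ℂ := (braMatrix e x)ᴴ * braMatrix e y
  have diagonal_mem :
      Fintype.card a • ∑ x, conjMap (P x x) - LinearMap.id ∈ krausCone n n := by
    have h := card_nsmul_sum_conjMap_sub_mem_krausCone Finset.univ fun x => P x x
    rwa [sum_conjTranspose_mul_braMatrix, conjMap_one] at h
  have offDiagonal_mem :
      Fintype.card a • ∑ x, ∑ y ∈ Finset.univ.erase x, conjMap (P x y) ∈ krausCone n n :=
    nsmul_mem (sum_mem fun x _ => sum_mem fun y _ => conjMap_mem_krausCone _) _
  have comp_eq_sum : tensorOne e ∘ₗ partialTrace e = ∑ x, ∑ y, conjMap (P x y) := by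
    ext1 M
    simp only [tensorOne, partialTrace, P, ← conjMap_comp, LinearMap.comp_apply,
      LinearMap.sum_apply, map_sum]
    exact Finset.sum_comm
  have split : ∑ x, ∑ y, conjMap (P x y)
      = ∑ x, conjMap (P x x) + ∑ x, ∑ y ∈ Finset.univ.erase x, conjMap (P x y) := by
    rw [← Finset.sum_add_distrib]
    exact Finset.sum_congr rfl fun x hx =>
      (Finset.add_sum_erase _ (fun y => conjMap (P x y)) hx).symm
  rw [comp_eq_sum, split, nsmul_add, add_sub_right_comm]
  exact add_mem diagonal_mem offDiagonal_mem

theorem card_le_card_of_leftInverse_of_partialTrace_comp_eq {h : Type*} [Fintype h]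
    (e : a × b ≃ n) {E : Matrix h h ℂ →ₗ[ℂ] Matrix n n ℂ} (hE : E ∈ krausCone n h)
    {D : Matrix n n ℂ →ₗ[ℂ] Matrix h h ℂ} (hD : IsCPTP D) (hDE : D ∘ₗ E = LinearMap.id)
    {σ : Matrix b b ℂ} (hσ : σ.trace = 1)
    (hEσ : partialTrace e ∘ₗ E = (traceLinearMap h ℂ ℂ).smulRight σ) :
    Fintype.card h ≤ Fintype.card a := by
  have expand : D ∘ₗ (Fintype.card a • (tensorOne e ∘ₗ partialTrace e) - LinearMap.id) ∘ₗ E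
      = Fintype.card a • (traceLinearMap h ℂ ℂ).smulRight (D (tensorOne e σ))
        - LinearMap.id := by
    ext1 M
    have hDEM : D (E M) = M := LinearMap.congr_fun hDE M
    have hEσM : partialTrace e (E M) = M.trace • σ := LinearMap.congr_fun hEσ M
    simp [hDEM, hEσM, -nsmul_eq_mul]
  have trace_nonneg := trace_nonneg_of_mem_krausCone (comp_mem_krausCone hD.mem_krausCone
    (comp_mem_krausCone (card_nsmul_tensorOne_comp_partialTrace_sub_id_mem_krausCone e) hE))
  have sq_le_sq : (Fintype.card h : ℂ) ^ 2 ≤ (Fintype.card a : ℂ) ^ 2 := by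
    rw [expand, map_sub, map_nsmul] at trace_nonneg
    simpa [LinearMap.trace_smulRight, hD.trace_apply, trace_tensorOne, hσ, sq,
      Module.finrank_matrix] using trace_nonneg
  exact (Nat.pow_le_pow_iff_left two_ne_zero).mp (by exact_mod_cast sq_le_sq)

end PartialTrace

section Shares

/-- Adjoining the coordinate `i` to the functions on `p` gives the functions on `q`, where `q` holds
at `i` and where `p` holds. -/
def consSubtypeEquiv {ι : Type*} [DecidableEq ι] (π : ι → Type*) {p q : ι → Prop} {i : ι}
    (hi : ¬p i) (hq : ∀ j, q j ↔ j = i ∨ p j) :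
    π i × (∀ j : {j // p j}, π j) ≃ ∀ j : {j // q j}, π j where
  toFun s j := if h : j.1 = i then h ▸ s.1 else s.2 ⟨j, ((hq j).mp j.2).resolve_left h⟩
  invFun g := (g ⟨i, (hq i).mpr (.inl rfl)⟩, fun j => g ⟨j, (hq j).mpr (.inr j.2)⟩)
  left_inv s := by
    ext j
    · simp
    · have hj : j.1 ≠ i := fun h => hi (h ▸ j.2)
      simp [hj]
  right_inv g := by
    ext ⟨j, hj⟩
    by_cases h : j = i
    · subst h
      simp
    · simp [h]

/-- `mergeFun X` as an equivalence; the traced out factor comes first. -/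
def mergeEquiv (X : Finset (Fin nn)) :
    (∀ j : {j // j ∉ X}, d j) × (∀ j : {j // j ∈ X}, d j) ≃ ∀ j, d j :=
  (Equiv.prodComm _ _).trans (Equiv.piEquivPiSubtypeProd (· ∈ X) d).symm

theorem ptraceSubset_eq_partialTrace (X : Finset (Fin nn)) (M : Matrix (∀ j, d j) (∀ j, d j) ℂ) :
    ptraceSubset X M = partialTrace (mergeEquiv X) M := by
  ext f g
  rw [partialTrace_apply]
  rfl

variable {i : Fin nn} {Y : Finset (Fin nn)}

/-- The shares in `insert i Y` split into the share `i` and the shares in `Y`. -/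
def insertEquiv (hi : i ∉ Y) :
    d i × (∀ j : {j // j ∈ Y}, d j) ≃ ∀ j : {j // j ∈ insert i Y}, d j :=
  consSubtypeEquiv d hi fun _ => Finset.mem_insert

/-- The shares outside `Y` split into the share `i` and the shares outside `insert i Y`. -/
def complInsertEquiv (hi : i ∉ Y) :
    d i × (∀ j : {j // j ∉ insert i Y}, d j) ≃ ∀ j : {j // j ∉ Y}, d j :=
  consSubtypeEquiv d (by simp) fun j => by grind

omit [∀ i, Fintype (d i)] [∀ i, DecidableEq (d i)] in
theorem mergeFun_insertEquiv (hi : i ∉ Y) (x : d i) (f : ∀ j : {j // j ∈ Y}, d j)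
    (z : ∀ j : {j // j ∉ insert i Y}, d j) :
    mergeFun (insert i Y) (insertEquiv hi (x, f)) z
      = mergeFun Y f (complInsertEquiv hi (x, z)) := by
  ext j
  obtain rfl | hj := eq_or_ne j i
  · simp [mergeFun, insertEquiv, complInsertEquiv, consSubtypeEquiv, hi]
  · by_cases hY : j ∈ Y <;>
      simp [mergeFun, insertEquiv, complInsertEquiv, consSubtypeEquiv, hj, hY]

theorem partialTrace_ptraceSubset_insert (hi : i ∉ Y) (M : Matrix (∀ j, d j) (∀ j, d j) ℂ) :
    partialTrace (insertEquiv hi) (ptraceSubset (insert i Y) M) = ptraceSubset Y M := by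
  ext f g
  simp only [partialTrace_apply, ptraceSubset, mergeFun_insertEquiv]
  rw [← Fintype.sum_prod_type', ← (complInsertEquiv hi).sum_comp]

variable {W : Matrix H H ℂ →ₗ[ℂ] Matrix (∀ j, d j) (∀ j, d j) ℂ}

omit [∀ i, DecidableEq (d i)] [DecidableEq H] in
theorem Forbidden.of_insert (hi : i ∉ Y) (h : Forbidden W (insert i Y)) : Forbidden W Y := by
  classical
  obtain ⟨σ, hσ, hWσ⟩ := h
  refine ⟨partialTrace (insertEquiv hi) σ, hσ.partialTrace _, fun ρ hρ => ?_⟩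
  rw [← partialTrace_ptraceSubset_insert hi, hWσ ρ hρ]

omit [∀ i, DecidableEq (d i)] [DecidableEq H] in
theorem Forbidden.erase (h : Forbidden W Y) (i : Fin nn) : Forbidden W (Y.erase i) := by
  by_cases hi : i ∈ Y
  · exact .of_insert (Finset.notMem_erase i Y) (by rwa [Finset.insert_erase hi])
  · rwa [Finset.erase_eq_of_notMem hi]

omit [DecidableEq H] in
theorem card_le_card_of_forbidden_of_qualified_insert (hW : W ∈ krausCone (∀ j, d j) H)
    (hi : i ∉ Y) (hY : Forbidden W Y) (hiY : Qualified W (insert i Y)) :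
    Fintype.card H ≤ Fintype.card (d i) := by
  obtain ⟨σ, hσ, hWσ⟩ := hY
  obtain ⟨R, hR, hRW⟩ := hiY
  let E := partialTrace (mergeEquiv (insert i Y)) ∘ₗ W
  have hE (ρ) : E ρ = ptraceSubset (insert i Y) (W ρ) := (ptraceSubset_eq_partialTrace _ _).symm
  have recovery : R ∘ₗ E = LinearMap.id := linearMap_ext_of_isDensity_s17 fun ρ hρ => by
    rw [LinearMap.comp_apply, hE, hRW ρ hρ, LinearMap.id_apply]
  have marginal : partialTrace (insertEquiv hi) ∘ₗ E = (traceLinearMap H ℂ ℂ).smulRight σ :=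
    linearMap_ext_of_isDensity_s17 fun ρ hρ => by
      rw [LinearMap.comp_apply, hE, partialTrace_ptraceSubset_insert, hWσ ρ hρ]
      simp [hρ.2]
  exact card_le_card_of_leftInverse_of_partialTrace_comp_eq (insertEquiv hi)
    (comp_mem_krausCone (partialTrace_mem_krausCone _) hW) hR recovery hσ.2 marginal

end Shares

/-- For any QSS scheme `W_N` and any significant share `i` (i.e. `{i} ∪ Y` is qualified
for some forbidden set `Y`), the dimension of the share system is at least the
dimension of the secret: `dim H ≤ dim H_i`. -/
theorem stmt_17
    (W : Matrix H H ℂ →ₗ[ℂ] Matrix ((i : Fin nn) → d i) ((i : Fin nn) → d i) ℂ)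
    (hW : IsCPTP W) (hrev : Qualified W Finset.univ)
    (i : Fin nn)
    (hsig : ∃ Y : Finset (Fin nn), Forbidden W Y ∧ Qualified W ({i} ∪ Y)) :
    Fintype.card H ≤ Fintype.card (d i) := by
  obtain ⟨Y, hY, hiY⟩ := hsig
  have union_eq : {i} ∪ Y = insert i (Y.erase i) := by grind
  exact card_le_card_of_forbidden_of_qualified_insert hW.mem_krausCone (Finset.notMem_erase i Y)
    (hY.erase i) (union_eq ▸ hiY)
end
end
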